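/- Let φ be an N-function such that t ↦ φ'(t)/t is non-decreasing on (0,∞), let δ = [δ₋, δ₊] ⊂ (0,∞) with 0 < δ₋ ≤ δ₊ < ∞, and let φ_δ be the shifted regularization with primal regularization error e_δ(t) := φ(t) − φ_δ(t). Then for all t ≥ 0 one has 0 ≤ e_δ(t), and moreover e_δ(t) ≤ (1/2)δ₋φ'(δ₋) − φ(δ₋) for t ∈ [0, δ₋), e_δ(t) = 0 for t ∈ [δ₋, δ₊], and e_δ(t) ≤ φ(t) − φ(δ₊) for t ∈ (δ₊, ∞). -/

import Mathlib

open Filter MeasureTheory Set Topology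

noncomputable section

/-- `φ : [0,∞) → [0,∞)` is an N-function with right-continuous non-decreasing
derivative `φ'`. -/
structure IsNFunction (φ φ' : ℝ → ℝ) : Prop where
  continuousOn : ContinuousOn φ (Set.Ici 0)
  convexOn : ConvexOn ℝ (Set.Ici 0) φ
  deriv_nonneg : ∀ t : ℝ, 0 ≤ t → 0 ≤ φ' t
  deriv_monotoneOn : MonotoneOn φ' (Set.Ici 0)
  deriv_rightContinuous : ∀ t : ℝ, 0 ≤ t →
    Filter.Tendsto φ' (nhdsWithin t (Set.Ioi t)) (nhds (φ' t))
  deriv_zero : φ' 0 = 0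
  deriv_pos : ∀ t : ℝ, 0 < t → 0 < φ' t
  deriv_tendsto_atTop : Filter.Tendsto φ' Filter.atTop Filter.atTop
  eq_integral : ∀ t : ℝ, 0 ≤ t → φ t = ∫ s in (0:ℝ)..t, φ' s

/-- Fenchel conjugate `φ*(r) = sup_{s ≥ 0} (r s − φ(s))`. -/
def fenchelConj (φ : ℝ → ℝ) (r : ℝ) : ℝ :=
  sSup {x : ℝ | ∃ s : ℝ, 0 ≤ s ∧ x = r * s - φ s}

/-- Right-continuous inverse `(φ')⁻¹(t) = sup {r ≥ 0 : φ'(r) ≤ t}`. -/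
def rcInv (φ' : ℝ → ℝ) (t : ℝ) : ℝ :=
  sSup {r : ℝ | 0 ≤ r ∧ φ' r ≤ t}

/-- Shifted regularization `φ_δ` for a relaxation interval `[δ₋, δ₊]`. -/
def phiDelta (φ φ' : ℝ → ℝ) (δm δp t : ℝ) : ℝ :=
  if t < δm then φ' δm / (2 * δm) * t ^ 2 + φ δm - δm / 2 * φ' δm
  else if t ≤ δp then φ t
  else φ' δp / (2 * δp) * t ^ 2 + φ δp - δp / 2 * φ' δp

/-!
Let `P_d` be the parabola centred at the origin which has the same value and the same slope as `φ`
at `d`. Then `φ_δ` is `P_{δ₋}` to the left of `δ₋` and `P_{δ₊}` to the right of `δ₊`. The derivative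
of `φ - P_d` at `s` is `s (φ'(s) / s - φ'(d) / d)`, so that monotonicity of `φ'(s) / s` makes
`φ - P_d` decrease on `[0, d]` down to `0` and increase from there on. Hence `e_δ ≥ 0`, and on
`[0, δ₋)` it is at most `e_δ(0)`. Beyond `δ₊`, the parabola `P_{δ₊}` stays above `φ(δ₊)`.
-/

/-- `φ` is the primitive on `[0, ∞)`, vanishing at `0`, of the locally integrable function `φ'`.
Integrability is part of the notion so that the integral does not take its junk value. -/
structure IsPrimitiveFromZero (φ φ' : ℝ → ℝ) : Prop where
  eq_integral : ∀ t : ℝ, 0 ≤ t → φ t = ∫ s in (0 : ℝ)..t, φ' s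
  intervalIntegrable_zero : ∀ t : ℝ, 0 ≤ t → IntervalIntegrable φ' volume 0 t

/-- The parabola in `t`, centred at the origin, with the value `φ d` and the slope `φ' d` at `d`;
the outer pieces of `phiDelta` are of this form. -/
def touchingParabola (φ φ' : ℝ → ℝ) (d t : ℝ) : ℝ :=
  φ' d / (2 * d) * t ^ 2 + φ d - d / 2 * φ' d

section

variable {φ φ' : ℝ → ℝ} {d δm δp s t : ℝ}

theorem IsNFunction.isPrimitiveFromZero (hφ : IsNFunction φ φ') : IsPrimitiveFromZero φ φ' where
  intervalIntegrable_zero t ht := by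
    refine (hφ.deriv_monotoneOn.mono ?_).intervalIntegrable
    rw [uIcc_of_le ht]
    exact Icc_subset_Ici_self
  eq_integral := hφ.eq_integral

namespace IsPrimitiveFromZero

theorem map_zero (hφ : IsPrimitiveFromZero φ φ') : φ 0 = 0 := by
  rw [hφ.eq_integral 0 le_rfl, intervalIntegral.integral_same]

theorem intervalIntegrable (hφ : IsPrimitiveFromZero φ φ') (hs : 0 ≤ s) (ht : 0 ≤ t) :
    IntervalIntegrable φ' volume s t :=
  (hφ.intervalIntegrable_zero s hs).symm.trans (hφ.intervalIntegrable_zero t ht)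

theorem sub_eq_integral (hφ : IsPrimitiveFromZero φ φ') (hs : 0 ≤ s) (ht : 0 ≤ t) :
    φ t - φ s = ∫ x in s..t, φ' x := by
  rw [hφ.eq_integral s hs, hφ.eq_integral t ht]
  exact intervalIntegral.integral_interval_sub_left (hφ.intervalIntegrable_zero t ht)
    (hφ.intervalIntegrable_zero s hs)

end IsPrimitiveFromZero

theorem touchingParabola_zero : touchingParabola φ φ' d 0 = φ d - d / 2 * φ' d := by
  simp [touchingParabola]

theorem touchingParabola_self : touchingParabola φ φ' d d = φ d := by
  unfold touchingParabola
  field_simp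
  ring

theorem touchingParabola_sub_eq_integral :
    touchingParabola φ φ' d t - touchingParabola φ φ' d s = ∫ x in s..t, φ' d / d * x := by
  rw [intervalIntegral.integral_const_mul, integral_id]
  unfold touchingParabola
  ring

theorem monotoneOn_touchingParabola (hd : 0 ≤ d) (hφ'd : 0 ≤ φ' d) :
    MonotoneOn (touchingParabola φ φ' d) (Ici 0) := by
  intro s hs t _ hst
  have coeff_nonneg : 0 ≤ φ' d / (2 * d) := div_nonneg hφ'd (mul_nonneg zero_le_two hd)
  have sq_le : s ^ 2 ≤ t ^ 2 := pow_le_pow_left₀ hs hst 2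
  unfold touchingParabola
  linarith [mul_le_mul_of_nonneg_left sq_le coeff_nonneg]

theorem antitoneOn_sub_touchingParabola (hφ : IsPrimitiveFromZero φ φ')
    (hmono : MonotoneOn (fun t ↦ φ' t / t) (Ioi 0)) :
    AntitoneOn (fun t ↦ φ t - touchingParabola φ φ' d t) (Icc 0 d) := by
  intro s hs t ht hst
  have deriv_le : ∀ x ∈ Ioo s t, φ' x ≤ φ' d / d * x := fun x hx ↦ by
    have hx0 : 0 < x := hs.1.trans_lt hx.1
    have hxd : x ≤ d := hx.2.le.trans ht.2
    exact (div_le_iff₀ hx0).1 (hmono hx0 (hx0.trans_le hxd) hxd)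
  have increment_le :
      φ t - φ s ≤ touchingParabola φ φ' d t - touchingParabola φ φ' d s := by
    rw [hφ.sub_eq_integral hs.1 ht.1, touchingParabola_sub_eq_integral]
    exact intervalIntegral.integral_mono_on_of_le_Ioo hst (hφ.intervalIntegrable hs.1 ht.1)
      (Continuous.intervalIntegrable (by fun_prop) s t) deriv_le
  linarith

theorem monotoneOn_sub_touchingParabola (hφ : IsPrimitiveFromZero φ φ')
    (hmono : MonotoneOn (fun t ↦ φ' t / t) (Ioi 0)) (hd : 0 < d) :
    MonotoneOn (fun t ↦ φ t - touchingParabola φ φ' d t) (Ici d) := by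
  intro s hs t ht hst
  have hs0 : 0 ≤ s := hd.le.trans hs
  have ht0 : 0 ≤ t := hd.le.trans ht
  have le_deriv : ∀ x ∈ Ioo s t, φ' d / d * x ≤ φ' x := fun x hx ↦ by
    have hdx : d ≤ x := le_trans hs hx.1.le
    have hx0 : 0 < x := hd.trans_le hdx
    exact (le_div_iff₀ hx0).1 (hmono hd hx0 hdx)
  have le_increment :
      touchingParabola φ φ' d t - touchingParabola φ φ' d s ≤ φ t - φ s := by
    rw [hφ.sub_eq_integral hs0 ht0, touchingParabola_sub_eq_integral]
    exact intervalIntegral.integral_mono_on_of_le_Ioo hst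
      (Continuous.intervalIntegrable (by fun_prop) s t) (hφ.intervalIntegrable hs0 ht0) le_deriv
  linarith

theorem touchingParabola_le (hφ : IsPrimitiveFromZero φ φ')
    (hmono : MonotoneOn (fun t ↦ φ' t / t) (Ioi 0)) (hd : 0 < d) (ht : 0 ≤ t) :
    touchingParabola φ φ' d t ≤ φ t := by
  have touch : φ d - touchingParabola φ φ' d d = 0 := by
    rw [touchingParabola_self, sub_self]
  rw [← sub_nonneg, ← touch]
  rcases le_total t d with htd | hdt
  · exact antitoneOn_sub_touchingParabola hφ hmono ⟨ht, htd⟩ ⟨hd.le, le_rfl⟩ htd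
  · exact monotoneOn_sub_touchingParabola hφ hmono hd self_mem_Ici hdt hdt

theorem sub_touchingParabola_le (hφ : IsPrimitiveFromZero φ φ')
    (hmono : MonotoneOn (fun t ↦ φ' t / t) (Ioi 0)) (ht : 0 ≤ t) (htd : t ≤ d) :
    φ t - touchingParabola φ φ' d t ≤ d / 2 * φ' d - φ d :=
  calc φ t - touchingParabola φ φ' d t
    _ ≤ φ 0 - touchingParabola φ φ' d 0 :=
      antitoneOn_sub_touchingParabola hφ hmono ⟨le_rfl, ht.trans htd⟩ ⟨ht, htd⟩ ht
    _ = d / 2 * φ' d - φ d := by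
      rw [hφ.map_zero, touchingParabola_zero, zero_sub, neg_sub]

theorem le_touchingParabola (hd : 0 ≤ d) (hφ'd : 0 ≤ φ' d) (hdt : d ≤ t) :
    φ d ≤ touchingParabola φ φ' d t := by
  rw [← touchingParabola_self (φ := φ) (φ' := φ')]
  exact monotoneOn_touchingParabola hd hφ'd hd (hd.trans hdt) hdt

theorem phiDelta_of_lt (ht : t < δm) : phiDelta φ φ' δm δp t = touchingParabola φ φ' δm t :=
  if_pos ht

theorem phiDelta_of_mem_Icc (ht : t ∈ Icc δm δp) : phiDelta φ φ' δm δp t = φ t := by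
  rw [phiDelta, if_neg ht.1.not_gt, if_pos ht.2]

theorem phiDelta_of_gt (hδ : δm ≤ δp) (ht : δp < t) :
    phiDelta φ φ' δm δp t = touchingParabola φ φ' δp t := by
  rw [phiDelta, if_neg (hδ.trans_lt ht).not_gt, if_neg ht.not_ge, touchingParabola]

theorem phiDelta_le (hφ : IsPrimitiveFromZero φ φ')
    (hmono : MonotoneOn (fun t ↦ φ' t / t) (Ioi 0)) (hδm : 0 < δm) (hδ : δm ≤ δp) (ht : 0 ≤ t) :
    phiDelta φ φ' δm δp t ≤ φ t := by
  rcases lt_or_ge t δm with htm | hmt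
  · rw [phiDelta_of_lt htm]
    exact touchingParabola_le hφ hmono hδm ht
  rcases le_or_gt t δp with htp | hpt
  · exact (phiDelta_of_mem_Icc ⟨hmt, htp⟩).le
  · rw [phiDelta_of_gt hδ hpt]
    exact touchingParabola_le hφ hmono (hδm.trans_le hδ) ht

end

theorem primal_regularization_error_general (φ φ' : ℝ → ℝ) (hφ : IsPrimitiveFromZero φ φ')
    (hmono : MonotoneOn (fun t ↦ φ' t / t) (Ioi 0))
    (δm δp : ℝ) (hδm : 0 < δm) (hδ : δm ≤ δp) (hφ'δp : 0 ≤ φ' δp) :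
    ∀ t : ℝ, 0 ≤ t →
      0 ≤ φ t - phiDelta φ φ' δm δp t ∧
      (t < δm → φ t - phiDelta φ φ' δm δp t ≤ δm / 2 * φ' δm - φ δm) ∧
      (δm ≤ t → t ≤ δp → φ t - phiDelta φ φ' δm δp t = 0) ∧
      (δp < t → φ t - phiDelta φ φ' δm δp t ≤ φ t - φ δp) := by
  intro t ht
  refine ⟨sub_nonneg.2 (phiDelta_le hφ hmono hδm hδ ht), fun htm ↦ ?left,
    fun hmt htp ↦ ?middle, fun hpt ↦ ?right⟩
  case left =>
    rw [phiDelta_of_lt htm]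
    exact sub_touchingParabola_le hφ hmono ht htm.le
  case middle => rw [phiDelta_of_mem_Icc ⟨hmt, htp⟩, sub_self]
  case right =>
    rw [phiDelta_of_gt hδ hpt]
    exact sub_le_sub_left (le_touchingParabola (hδm.le.trans hδ) hφ'δp hpt.le) _

/-- pointwise primal regularization error bounds for
`e_δ(t) = φ(t) − φ_δ(t)`. -/
theorem primal_regularization_error (φ φ' : ℝ → ℝ) (hφ : IsNFunction φ φ')
    (hmono : ∀ t T : ℝ, 0 < t → t ≤ T → φ' t / t ≤ φ' T / T)
    (δm δp : ℝ) (hδm : 0 < δm) (hδ : δm ≤ δp) :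
    ∀ t : ℝ, 0 ≤ t →
      0 ≤ φ t - phiDelta φ φ' δm δp t ∧
      (t < δm → φ t - phiDelta φ φ' δm δp t ≤ δm / 2 * φ' δm - φ δm) ∧
      (δm ≤ t → t ≤ δp → φ t - phiDelta φ φ' δm δp t = 0) ∧
      (δp < t → φ t - phiDelta φ φ' δm δp t ≤ φ t - φ δp) := by
  exact primal_regularization_error_general φ φ' hφ.isPrimitiveFromZero
    (fun t ht T _ htT ↦ hmono t T ht htT) δm δp hδm hδ
    (hφ.deriv_nonneg δp (hδm.le.trans hδ))
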